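/- Let X ∈ ℝ^{d×n} be (ε,B)-orthonormal with ε < 1/λ_σ, and let Φ ∈ ℝ^{n×n} have entries Φ_{αβ} = E_{w~N(0,Id)}[σ(wᵀx_α)σ(wᵀx_β)], where σ is twice differentiable with |σ'|,|σ''| ≤ λ_σ, E[σ(ξ)]=0, E[σ(ξ)²]=1 for ξ ~ N(0,1), and b_σ = E[σ'(ξ)]. Then there is a universal constant C > 0 such that: (i) for all α ≠ β, |Φ_{αβ} − b_σ² x_αᵀx_β| ≤ Cλ_σ²ε²; (ii) for all α, |E_{w~N(0,Id)}[σ(wᵀx_α)]| ≤ Cλ_σ|‖x_α‖²−1| ≤ Cλ_σε; and (iii) for all α, |Φ_{αα} − 1| ≤ Cλ_σ|‖x_α‖²−1| ≤ Cλ_σε. -/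

import Mathlib

/-!
Lemma (entries of the second-moment matrix): deterministic bounds on the entries of
`Φ_{αβ} = E[σ(wᵀx_α)σ(wᵀx_β)]` for an `(ε,B)`-orthonormal input matrix.
-/

open MeasureTheory ProbabilityTheory Filter Topology Matrix

noncomputable abbrev stdGaussian : Measure ℝ := gaussianReal 0 1

noncomputable abbrev gaussianVec (d : ℕ) : Measure (Fin d → ℝ) :=
  Measure.pi fun _ => stdGaussian

noncomputable abbrev gaussianMat (a b : ℕ) : Measure (Fin a → Fin b → ℝ) :=
  Measure.pi fun _ => gaussianVec b

/-- ℓ₂→ℓ₂ operator norm of a real matrix. -/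
noncomputable def opNorm {m n : ℕ} (X : Matrix (Fin m) (Fin n) ℝ) : ℝ :=
  ‖LinearMap.toContinuousLinearMap (Matrix.toEuclideanLin X)‖

/-- `(ε,B)`-orthonormality of the columns of a matrix. -/
def IsOrthonormal {d n : ℕ} (ε B : ℝ) (X : Matrix (Fin d) (Fin n) ℝ) : Prop :=
  (∀ α : Fin n, |(∑ i, X i α ^ 2) - 1| ≤ ε) ∧
  (∀ α β : Fin n, α ≠ β → |∑ i, X i α * X i β| ≤ ε) ∧
  opNorm X ≤ B ∧
  ∑ α : Fin n, ((∑ i, X i α ^ 2) - 1) ^ 2 ≤ B ^ 2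

/-!
To compare an off-diagonal entry with its linear part, write `y = a • x + z` with `z ⟂ x`, where
`a = ⟪x, y⟫ / ‖x‖ ^ 2`. Then `⟪y, w⟫ = a * U + Z` with `U = ⟪x, w⟫` and `Z = ⟪z, w⟫` independent
centred Gaussians. Expanding `σ (a * U + Z)` to first order in `a * U`, with an `O(a ^ 2)` remainder
because `σ'` is Lipschitz, leaves the product of means `E σ(U) * E σ(Z)`, quadratically small, plus
`a * E[U σ(U)] * E σ'(Z)`, which Stein's identity turns into `⟪x, y⟫ * E σ'(U) * E σ'(Z)`. Passing
from variance `s ^ 2` to variance `1` by the coupling `s * ξ` of both Gaussians costs only a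
multiple of `|s ^ 2 - 1|`. When `K * ε` is bounded below, Cauchy–Schwarz and `|E σ'(ξ)| ≤ 1`
suffice.
-/

open scoped NNReal ENNReal RealInnerProductSpace

section LTwo

variable {Ω : Type*} {mΩ : MeasurableSpace Ω} {μ : Measure Ω} {f g : Ω → ℝ} {a b : ℝ}

lemma integral_abs_mul_le_mul_of_integral_sq_le (hf : MemLp f 2 μ) (hg : MemLp g 2 μ)
    (ha : 0 ≤ a) (hb : 0 ≤ b) (hfa : ∫ ω, f ω ^ 2 ∂μ ≤ a ^ 2) (hgb : ∫ ω, g ω ^ 2 ∂μ ≤ b ^ 2) :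
    ∫ ω, |f ω * g ω| ∂μ ≤ a * b := by
  have holder : ∫ ω, |f ω * g ω| ∂μ ≤ √(∫ ω, f ω ^ 2 ∂μ) * √(∫ ω, g ω ^ 2 ∂μ) := by
    have h := integral_mul_norm_le_Lp_mul_Lq Real.HolderConjugate.two_two
      (by simpa using hf) (by simpa using hg)
    simpa [abs_mul, Real.sqrt_eq_rpow] using h
  exact holder.trans (mul_le_mul (Real.sqrt_le_iff.2 ⟨ha, hfa⟩) (Real.sqrt_le_iff.2 ⟨hb, hgb⟩)
    (Real.sqrt_nonneg _) ha)

lemma abs_integral_le_of_integral_sq_le [IsProbabilityMeasure μ] (hf : MemLp f 2 μ)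
    (ha : 0 ≤ a) (hfa : ∫ ω, f ω ^ 2 ∂μ ≤ a ^ 2) : |∫ ω, f ω ∂μ| ≤ a := by
  have h := integral_abs_mul_le_mul_of_integral_sq_le hf (memLp_const 1) ha zero_le_one hfa
    (by simp)
  simp only [mul_one] at h
  exact abs_integral_le_integral_abs.trans h

lemma abs_integral_sq_sub_integral_sq_le (hf : MemLp f 2 μ) (hg : MemLp g 2 μ)
    (ha : 0 ≤ a) (hb : 0 ≤ b) (hga : ∫ ω, g ω ^ 2 ∂μ ≤ a ^ 2)
    (hfgb : ∫ ω, (f ω - g ω) ^ 2 ∂μ ≤ b ^ 2) :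
    |∫ ω, f ω ^ 2 ∂μ - ∫ ω, g ω ^ 2 ∂μ| ≤ 2 * a * b + b ^ 2 := by
  have hfg : MemLp (fun ω => f ω - g ω) 2 μ := hf.sub hg
  have hcross : Integrable (fun ω => g ω * (f ω - g ω)) μ := hg.integrable_mul hfg
  have hexpand : ∫ ω, f ω ^ 2 ∂μ - ∫ ω, g ω ^ 2 ∂μ
      = 2 * ∫ ω, g ω * (f ω - g ω) ∂μ + ∫ ω, (f ω - g ω) ^ 2 ∂μ := by
    rw [← integral_sub hf.integrable_sq hg.integrable_sq, ← integral_const_mul,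
      ← integral_add (hcross.const_mul 2) hfg.integrable_sq]
    congr with ω
    ring
  have hcross_le : |∫ ω, g ω * (f ω - g ω) ∂μ| ≤ a * b :=
    abs_integral_le_integral_abs.trans
      (integral_abs_mul_le_mul_of_integral_sq_le hg hfg ha hb hga hfgb)
  have hsq_nonneg : 0 ≤ ∫ ω, (f ω - g ω) ^ 2 ∂μ := integral_nonneg fun ω => sq_nonneg _
  obtain ⟨hlower, hupper⟩ := abs_le.1 hcross_le
  rw [hexpand, abs_le]
  constructor <;> linarith [sq_nonneg b]

end LTwo

section Lipschitz

lemma memLp_comp_of_lipschitzWith {Ω E F : Type*} {mΩ : MeasurableSpace Ω} {μ : Measure Ω}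
    [IsFiniteMeasure μ] [NormedAddCommGroup E] [NormedAddCommGroup F] {f : E → F} {K : ℝ≥0}
    {X : Ω → E} {p : ℝ≥0∞} (hf : LipschitzWith K f) (hX : MemLp X p μ) :
    MemLp (fun ω => f (X ω)) p μ := by
  have hcentred : LipschitzWith K fun x => f x - f 0 := by
    simpa using hf.sub (LipschitzWith.const (f 0))
  refine ((hcentred.comp_memLp (sub_self _) hX).add (memLp_const (f 0))).ae_eq ?_
  exact .of_forall fun ω => sub_add_cancel _ _

lemma sq_sub_le_of_lipschitzWith {f : ℝ → ℝ} {K : ℝ≥0} (hf : LipschitzWith K f) (x y : ℝ) :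
    (f x - f y) ^ 2 ≤ K ^ 2 * (x - y) ^ 2 := by
  have h : |f x - f y| ≤ K * |x - y| := by simpa [Real.dist_eq] using hf.dist_le_mul x y
  calc (f x - f y) ^ 2 = |f x - f y| ^ 2 := (sq_abs _).symm
    _ ≤ (K * |x - y|) ^ 2 := by gcongr
    _ = K ^ 2 * (x - y) ^ 2 := by rw [mul_pow, sq_abs]

lemma lipschitzWith_of_abs_deriv_le {f f' : ℝ → ℝ} {K : ℝ≥0}
    (hf : ∀ x, HasDerivAt f (f' x) x) (hf' : ∀ x, |f' x| ≤ K) : LipschitzWith K f :=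
  lipschitzWith_of_nnnorm_deriv_le (fun x => (hf x).differentiableAt) fun x => by
    rw [(hf x).deriv]
    exact hf' x

lemma abs_sub_sub_mul_le_of_lipschitzWith_deriv {f f' : ℝ → ℝ} {K : ℝ≥0}
    (hf : ∀ x, HasDerivAt f (f' x) x) (hf' : LipschitzWith K f') (x h : ℝ) :
    |f (h + x) - f x - h * f' x| ≤ K * h ^ 2 := by
  have hderiv (y : ℝ) : HasDerivAt (fun y => f y - y * f' x) (f' y - f' x) y := by
    simpa using (hf y).fun_sub ((hasDerivAt_id y).mul_const (f' x))
  have hbound : ∀ y ∈ Metric.closedBall x |h|, ‖f' y - f' x‖ ≤ K * |h| := fun y hy =>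
    (hf'.norm_sub_le y x).trans (by gcongr; simpa [Real.dist_eq] using hy)
  have hmvt := (convex_closedBall x |h|).norm_image_sub_le_of_norm_hasDerivWithin_le
    (fun y _ => (hderiv y).hasDerivWithinAt) hbound (x := x) (y := h + x) (by simp) (by simp)
  calc |f (h + x) - f x - h * f' x|
      = ‖f (h + x) - (h + x) * f' x - (f x - x * f' x)‖ := by rw [Real.norm_eq_abs]; congr 1; ring
    _ ≤ K * |h| * ‖h + x - x‖ := hmvt
    _ = K * h ^ 2 := by rw [add_sub_cancel_right, Real.norm_eq_abs, mul_assoc, abs_mul_abs_self, sq]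

variable {μ : Measure ℝ} {f : ℝ → ℝ} {K : ℝ≥0}

lemma integral_sq_comp_mul_sub_comp_mul_le [IsFiniteMeasure μ] (hμ : MemLp id 2 μ)
    (hf : LipschitzWith K f) (s t : ℝ) :
    ∫ x, (f (s * x) - f (t * x)) ^ 2 ∂μ ≤ (K * |s - t|) ^ 2 * ∫ x, x ^ 2 ∂μ := by
  have hscale (r : ℝ) : MemLp (fun x => f (r * x)) 2 μ :=
    memLp_comp_of_lipschitzWith hf (hμ.const_mul r)
  rw [← integral_const_mul]
  refine integral_mono ((hscale s).sub (hscale t)).integrable_sq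
    (hμ.integrable_sq.const_mul _) fun x => ?_
  calc (f (s * x) - f (t * x)) ^ 2 ≤ K ^ 2 * (s * x - t * x) ^ 2 :=
        sq_sub_le_of_lipschitzWith hf _ _
    _ = (K * |s - t|) ^ 2 * x ^ 2 := by rw [mul_pow, sq_abs]; ring

lemma variance_le_sq_mul_variance_of_lipschitzWith [IsProbabilityMeasure μ] (hμ : MemLp id 2 μ)
    (hf : LipschitzWith K f) : Var[f; μ] ≤ K ^ 2 * Var[id; μ] := by
  have hfμ : MemLp f 2 μ := memLp_comp_of_lipschitzWith hf hμ
  have hcentred : MemLp (fun x => f x - f μ[id]) 2 μ := hfμ.sub (memLp_const _)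
  calc Var[f; μ] = Var[fun x => f x - f μ[id]; μ] :=
        (variance_sub_const hfμ.aestronglyMeasurable _).symm
    _ ≤ ∫ x, (f x - f μ[id]) ^ 2 ∂μ := variance_le_expectation_sq hcentred.aestronglyMeasurable
    _ ≤ ∫ x, K ^ 2 * (x - μ[id]) ^ 2 ∂μ :=
        integral_mono hcentred.integrable_sq
          ((hμ.sub (memLp_const _)).integrable_sq.const_mul _)
          fun x => sq_sub_le_of_lipschitzWith hf x _
    _ = K ^ 2 * Var[id; μ] := by
        rw [integral_const_mul, variance_eq_integral aemeasurable_id]; rfl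

end Lipschitz

section Gaussian

variable {m : ℝ} {v : ℝ≥0}

lemma hasDerivAt_gaussianPDFReal (m : ℝ) (v : ℝ≥0) (x : ℝ) :
    HasDerivAt (gaussianPDFReal m v) (-((x - m) / v) * gaussianPDFReal m v x) x := by
  have hexponent : HasDerivAt (fun y => -(y - m) ^ 2 / (2 * v)) (-((x - m) / v)) x := by
    refine ((((hasDerivAt_id x).sub_const m).fun_pow 2).fun_neg.div_const (2 * (v : ℝ))).congr_deriv
      ?_
    simp [mul_div_mul_left, neg_div]
  rw [gaussianPDFReal_def]
  exact (hexponent.exp.const_mul (√(2 * Real.pi * v))⁻¹).congr_deriv (by ring)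

lemma integrable_mul_gaussianPDFReal {f : ℝ → ℝ} (hv : v ≠ 0)
    (hf : Integrable f (gaussianReal m v)) :
    Integrable fun x => f x * gaussianPDFReal m v x := by
  rw [gaussianReal_of_var_ne_zero m hv, integrable_withDensity_iff (measurable_gaussianPDF m v)
    (.of_forall fun _ => gaussianPDF_lt_top)] at hf
  simpa using hf

-- Stein's identity, which is integration by parts against `p' = -(x - m) / v * p`.
lemma integral_sub_mul_gaussianReal {f f' : ℝ → ℝ} (hderiv : ∀ x, HasDerivAt f (f' x) x)
    (hf : Integrable f (gaussianReal m v)) (hf' : Integrable f' (gaussianReal m v))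
    (hmf : Integrable (fun x => (x - m) * f x) (gaussianReal m v)) :
    ∫ x, (x - m) * f x ∂gaussianReal m v = v * ∫ x, f' x ∂gaussianReal m v := by
  rcases eq_or_ne v 0 with rfl | hv
  · simp
  have hint : Integrable fun x => f x * (-((x - m) / v) * gaussianPDFReal m v x) := by
    refine ((integrable_mul_gaussianPDFReal hv hmf).const_mul (-(v : ℝ)⁻¹)).congr
      (.of_forall fun x => ?_)
    simp only
    ring
  have hparts := integral_mul_deriv_eq_deriv_mul_of_integrable (fun x _ => hderiv x)
    (fun x _ => hasDerivAt_gaussianPDFReal m v x) hint (integrable_mul_gaussianPDFReal hv hf')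
    (integrable_mul_gaussianPDFReal hv hf)
  simp only [integral_gaussianReal_eq_integral_smul hv, smul_eq_mul]
  calc ∫ x, gaussianPDFReal m v x * ((x - m) * f x)
      = -(v * ∫ x, f x * (-((x - m) / v) * gaussianPDFReal m v x)) := by
        rw [← integral_const_mul, ← integral_neg]
        congr with x
        field_simp
    _ = v * ∫ x, gaussianPDFReal m v x * f' x := by
        rw [hparts, mul_neg, neg_neg]
        simp only [mul_comm]

lemma integrable_pow_gaussianReal (n : ℕ) : Integrable (fun x => x ^ n) (gaussianReal m v) := by
  rcases eq_or_ne n 0 with rfl | hn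
  · simp
  · refine ((memLp_id_gaussianReal' n (by simp)).integrable_norm_pow hn).mono' (by fun_prop)
      (.of_forall fun x => ?_)
    simp

lemma integral_sq_gaussianReal : ∫ x, x ^ 2 ∂gaussianReal 0 v = v := by
  rw [← variance_of_integral_eq_zero (by fun_prop) integral_id_gaussianReal,
    variance_fun_id_gaussianReal]

lemma integral_pow_four_gaussianReal : ∫ x, x ^ 4 ∂gaussianReal 0 v = 3 * (v : ℝ) ^ 2 := by
  have hcube (x : ℝ) : HasDerivAt (fun y => y ^ 3) (3 * x ^ 2) x := by
    simpa using hasDerivAt_pow 3 x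
  have hstein := integral_sub_mul_gaussianReal (m := 0) (v := v) hcube
    (integrable_pow_gaussianReal 3) ((integrable_pow_gaussianReal 2).const_mul 3)
    ((integrable_pow_gaussianReal 4).congr (.of_forall fun x => by simp only; ring))
  calc ∫ x, x ^ 4 ∂gaussianReal 0 v = ∫ x, (x - 0) * x ^ 3 ∂gaussianReal 0 v := by
        congr with x
        ring
    _ = 3 * (v : ℝ) ^ 2 := by
        rw [hstein, integral_const_mul, integral_sq_gaussianReal]
        ring

lemma memLp_pow_gaussianReal (n : ℕ) : MemLp (fun x => x ^ n) 2 (gaussianReal m v) := by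
  refine (memLp_two_iff_integrable_sq (by fun_prop)).2 ?_
  simpa only [← pow_mul] using integrable_pow_gaussianReal (n * 2)

lemma integral_gaussianReal_zero_sq {f : ℝ → ℝ} (hf : Continuous f) (s : ℝ≥0) :
    ∫ x, f x ∂gaussianReal 0 (s ^ 2) = ∫ x, f (s * x) ∂gaussianReal 0 1 := by
  have hmap : (gaussianReal 0 1).map (fun x => (s : ℝ) * x) = gaussianReal 0 (s ^ 2) := by
    rw [gaussianReal_map_const_mul, mul_zero, mul_one]
    rfl
  rw [← hmap, integral_map (by fun_prop) hf.aestronglyMeasurable]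

variable {f : ℝ → ℝ} {K : ℝ≥0}

lemma memLp_gaussianReal_of_lipschitzWith (hf : LipschitzWith K f) (p : ℝ≥0∞) (hp : p ≠ ∞) :
    MemLp f p (gaussianReal m v) :=
  memLp_comp_of_lipschitzWith hf (memLp_id_gaussianReal' p hp)

lemma integrable_gaussianReal_of_lipschitzWith (hf : LipschitzWith K f) :
    Integrable f (gaussianReal m v) :=
  (memLp_gaussianReal_of_lipschitzWith hf 1 (by simp)).integrable le_rfl

lemma integrable_id_mul_gaussianReal_of_lipschitzWith (hf : LipschitzWith K f) :
    Integrable (fun x => x * f x) (gaussianReal m v) :=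
  (memLp_id_gaussianReal' 2 (by simp)).integrable_mul
    (memLp_gaussianReal_of_lipschitzWith hf 2 (by simp))

lemma integral_id_mul_gaussianReal_of_lipschitzWith {f' : ℝ → ℝ} {K' : ℝ≥0}
    (hderiv : ∀ x, HasDerivAt f (f' x) x) (hf : LipschitzWith K f) (hf' : LipschitzWith K' f') :
    ∫ x, x * f x ∂gaussianReal 0 v = v * ∫ x, f' x ∂gaussianReal 0 v := by
  simpa using integral_sub_mul_gaussianReal (m := 0) hderiv
    (integrable_gaussianReal_of_lipschitzWith hf) (integrable_gaussianReal_of_lipschitzWith hf')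
    (by simpa using integrable_id_mul_gaussianReal_of_lipschitzWith hf)

lemma integral_abs_sq_mul_gaussianReal_le (hf : MemLp f 2 (gaussianReal 0 v)) {a : ℝ}
    (ha : 0 ≤ a) (hfa : ∫ x, f x ^ 2 ∂gaussianReal 0 v ≤ a ^ 2) :
    ∫ x, |x ^ 2 * f x| ∂gaussianReal 0 v ≤ 2 * v * a := by
  refine integral_abs_mul_le_mul_of_integral_sq_le (memLp_pow_gaussianReal 2) hf
    (by positivity) ha ?_ hfa
  calc ∫ x, (x ^ 2) ^ 2 ∂gaussianReal 0 v = 3 * (v : ℝ) ^ 2 := by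
        simp only [← pow_mul, integral_pow_four_gaussianReal]
    _ ≤ (2 * v) ^ 2 := by linarith [sq_nonneg (v : ℝ)]

lemma memLp_comp_mul_gaussianReal_of_lipschitzWith (hf : LipschitzWith K f) (s : ℝ) :
    MemLp (fun x => f (s * x)) 2 (gaussianReal m v) :=
  memLp_comp_of_lipschitzWith hf ((memLp_id_gaussianReal' 2 (by simp)).const_mul s)

lemma integral_sq_comp_mul_sub_comp_mul_gaussianReal_le (hf : LipschitzWith K f) (s t : ℝ) :
    ∫ x, (f (s * x) - f (t * x)) ^ 2 ∂gaussianReal 0 1 ≤ (K * |s - t|) ^ 2 := by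
  simpa [integral_sq_gaussianReal] using
    integral_sq_comp_mul_sub_comp_mul_le (memLp_id_gaussianReal' (μ := 0) (v := 1) 2 (by simp))
      hf s t

lemma abs_integral_gaussianReal_sub_le (hf : LipschitzWith K f) (s t : ℝ≥0) :
    |∫ x, f x ∂gaussianReal 0 (s ^ 2) - ∫ x, f x ∂gaussianReal 0 (t ^ 2)| ≤ K * |(s - t : ℝ)| := by
  have hL2 (r : ℝ) : MemLp (fun x => f (r * x)) 2 (gaussianReal 0 1) :=
    memLp_comp_mul_gaussianReal_of_lipschitzWith hf r
  rw [integral_gaussianReal_zero_sq hf.continuous, integral_gaussianReal_zero_sq hf.continuous,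
    ← integral_sub ((hL2 s).integrable (by simp)) ((hL2 t).integrable (by simp))]
  exact abs_integral_le_of_integral_sq_le ((hL2 s).sub (hL2 t)) (by positivity)
    (integral_sq_comp_mul_sub_comp_mul_gaussianReal_le hf s t)

lemma abs_integral_sq_gaussianReal_sub_le (hf : LipschitzWith K f) (s t : ℝ≥0) {a : ℝ}
    (ha : 0 ≤ a) (hfa : ∫ x, f x ^ 2 ∂gaussianReal 0 (t ^ 2) ≤ a ^ 2) :
    |∫ x, f x ^ 2 ∂gaussianReal 0 (s ^ 2) - ∫ x, f x ^ 2 ∂gaussianReal 0 (t ^ 2)|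
      ≤ 2 * a * (K * |(s - t : ℝ)|) + (K * |(s - t : ℝ)|) ^ 2 := by
  have hcont : Continuous fun x => f x ^ 2 := hf.continuous.pow 2
  rw [integral_gaussianReal_zero_sq hcont] at hfa ⊢
  rw [integral_gaussianReal_zero_sq hcont]
  exact abs_integral_sq_sub_integral_sq_le (memLp_comp_mul_gaussianReal_of_lipschitzWith hf s)
    (memLp_comp_mul_gaussianReal_of_lipschitzWith hf t) ha (by positivity) hfa
    (integral_sq_comp_mul_sub_comp_mul_gaussianReal_le hf s t)

lemma abs_sub_one_le_abs_sq_sub_one {s : ℝ} (hs : 0 ≤ s) : |s - 1| ≤ |s ^ 2 - 1| := by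
  calc |s - 1| = |s - 1| * 1 := (mul_one _).symm
    _ ≤ |s - 1| * (s + 1) := by gcongr; linarith
    _ = |s ^ 2 - 1| := by
        rw [← abs_of_nonneg (by positivity : 0 ≤ s + 1), ← abs_mul]
        congr 1
        ring

lemma abs_integral_gaussianReal_sub_integral_gaussianReal_one_le (hf : LipschitzWith K f)
    (s : ℝ≥0) :
    |∫ x, f x ∂gaussianReal 0 (s ^ 2) - ∫ x, f x ∂gaussianReal 0 1| ≤ K * |(s ^ 2 - 1 : ℝ)| := by
  have h := abs_integral_gaussianReal_sub_le hf s 1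
  rw [one_pow, NNReal.coe_one] at h
  exact h.trans (mul_le_mul_of_nonneg_left (abs_sub_one_le_abs_sq_sub_one s.2) K.2)

end Gaussian

section Product

variable {μ ν : Measure ℝ} [SFinite μ] [IsProbabilityMeasure ν] {f g g' : ℝ → ℝ} {K : ℝ≥0}

-- Taylor expansion of `g` around the second, independent, coordinate.
lemma abs_integral_prod_mul_comp_add_sub_le (hg : ∀ x, HasDerivAt g (g' x) x)
    (hg' : LipschitzWith K g') (hf : Integrable f μ) (hxf : Integrable (fun x => x * f x) μ)
    (hx2f : Integrable (fun x => x ^ 2 * f x) μ) (hgν : Integrable g ν) (hg'ν : Integrable g' ν)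
    (a : ℝ) :
    |∫ u, f u.1 * g (a * u.1 + u.2) ∂μ.prod ν - (∫ x, f x ∂μ) * (∫ x, g x ∂ν)
        - a * ((∫ x, x * f x ∂μ) * ∫ x, g' x ∂ν)|
      ≤ K * a ^ 2 * ∫ x, |x ^ 2 * f x| ∂μ := by
  let remainder (u : ℝ × ℝ) : ℝ := f u.1 * (g (a * u.1 + u.2) - g u.2 - a * u.1 * g' u.2)
  have hg_cont : Continuous g := continuous_iff_continuousAt.2 fun x => (hg x).continuousAt
  have hremainder_le (u : ℝ × ℝ) : ‖remainder u‖ ≤ K * a ^ 2 * |u.1 ^ 2 * f u.1| := by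
    calc ‖remainder u‖ = |f u.1| * |g (a * u.1 + u.2) - g u.2 - a * u.1 * g' u.2| := abs_mul _ _
      _ ≤ |f u.1| * (K * (a * u.1) ^ 2) := by
          gcongr
          exact abs_sub_sub_mul_le_of_lipschitzWith_deriv hg hg' _ _
      _ = K * a ^ 2 * |u.1 ^ 2 * f u.1| := by rw [abs_mul, abs_sq]; ring
  have hbound_int : Integrable (fun u : ℝ × ℝ => K * a ^ 2 * |u.1 ^ 2 * f u.1|) (μ.prod ν) :=
    (hx2f.abs.const_mul _).comp_fst ν
  have hremainder_int : Integrable remainder (μ.prod ν) := by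
    refine hbound_int.mono' (hf.aestronglyMeasurable.comp_fst.mul ?_) (.of_forall hremainder_le)
    have hg'_cont := hg'.continuous
    exact Continuous.aestronglyMeasurable (by fun_prop)
  have hzeroth := hf.mul_prod hgν
  have hfirst := (hxf.mul_prod hg'ν).const_mul a
  have hmain : Integrable (fun u : ℝ × ℝ => f u.1 * g u.2 + a * (u.1 * f u.1 * g' u.2))
      (μ.prod ν) := hzeroth.add hfirst
  have hexpand : ∫ u, f u.1 * g (a * u.1 + u.2) ∂μ.prod ν = (∫ x, f x ∂μ) * (∫ x, g x ∂ν)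
      + a * ((∫ x, x * f x ∂μ) * ∫ x, g' x ∂ν) + ∫ u, remainder u ∂μ.prod ν := by
    rw [← integral_prod_mul, ← integral_prod_mul, ← integral_const_mul,
      ← integral_add hzeroth hfirst, ← integral_add hmain hremainder_int]
    congr with u
    simp only [remainder]
    ring
  calc _ = ‖∫ u, remainder u ∂μ.prod ν‖ := by rw [hexpand, Real.norm_eq_abs]; congr 1; ring
    _ ≤ ∫ u, K * a ^ 2 * |u.1 ^ 2 * f u.1| ∂μ.prod ν :=
        norm_integral_le_of_norm_le hbound_int (.of_forall hremainder_le)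
    _ = K * a ^ 2 * ∫ x, |x ^ 2 * f x| ∂μ := by
        rw [integral_const_mul, integral_fun_fst (fun x => |x ^ 2 * f x|)]
        simp

end Product

lemma norm_sub_inner_div_smul_sq {E : Type*} [NormedAddCommGroup E] [InnerProductSpace ℝ E]
    (x y : E) :
    ‖y - (⟪x, y⟫ / ‖x‖ ^ 2) • x‖ ^ 2 = ‖y‖ ^ 2 - ⟪x, y⟫ ^ 2 / ‖x‖ ^ 2 := by
  rcases eq_or_ne x 0 with rfl | hx
  · simp
  rw [norm_sub_sq_real, norm_smul, real_inner_smul_right, real_inner_comm, mul_pow,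
    Real.norm_eq_abs, sq_abs]
  field_simp
  ring

section StdGaussian

variable {E : Type*} [NormedAddCommGroup E] [InnerProductSpace ℝ E] [FiniteDimensional ℝ E]
  [MeasurableSpace E] [BorelSpace E] {f g f' g' : ℝ → ℝ} {K : ℝ≥0} {x z : E}

lemma map_inner_stdGaussian (x : E) :
    (ProbabilityTheory.stdGaussian E).map (fun w => ⟪x, w⟫) = gaussianReal 0 (‖x‖₊ ^ 2) := by
  have h := IsGaussian.map_eq_gaussianReal (μ := ProbabilityTheory.stdGaussian E) (innerSL ℝ x)
  rw [integral_strongDual_stdGaussian, variance_dual_stdGaussian, innerSL_apply_norm] at h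
  rw [← Real.toNNReal_coe (r := ‖x‖₊ ^ 2)]
  exact h

lemma map_inner_prodMk_stdGaussian (hxz : ⟪x, z⟫ = 0) :
    (ProbabilityTheory.stdGaussian E).map (fun w => (⟪x, w⟫, ⟪z, w⟫))
      = (gaussianReal 0 (‖x‖₊ ^ 2)).prod (gaussianReal 0 (‖z‖₊ ^ 2)) := by
  have hjoint : HasGaussianLaw (fun w => (⟪x, w⟫, ⟪z, w⟫)) (ProbabilityTheory.stdGaussian E) :=
    (IsGaussian.hasGaussianLaw_id (μ := ProbabilityTheory.stdGaussian E)).map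
      ((innerSL ℝ x).prod (innerSL ℝ z))
  have hcov : cov[fun w => ⟪x, w⟫, fun w => ⟪z, w⟫; ProbabilityTheory.stdGaussian E] = 0 := by
    rw [← covarianceBilin_apply_eq_cov IsGaussian.memLp_two_id, covarianceBilin_stdGaussian]
    exact hxz
  rw [(indepFun_iff_map_prod_eq_prod_map_map (by fun_prop) (by fun_prop)).1
    (hjoint.indepFun_of_covariance_eq_zero hcov), map_inner_stdGaussian, map_inner_stdGaussian]

lemma integral_comp_inner_stdGaussian (hf : Continuous f) (x : E) :
    ∫ w, f ⟪x, w⟫ ∂ProbabilityTheory.stdGaussian E = ∫ u, f u ∂gaussianReal 0 (‖x‖₊ ^ 2) := by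
  rw [← map_inner_stdGaussian, integral_map (by fun_prop) hf.aestronglyMeasurable]

lemma abs_integral_mul_comp_inner_sub_le {Kf Kf' Kg Kg' : ℝ≥0}
    (hf : ∀ u, HasDerivAt f (f' u) u) (hg : ∀ u, HasDerivAt g (g' u) u)
    (hfL : LipschitzWith Kf f) (hf'L : LipschitzWith Kf' f') (hgL : LipschitzWith Kg g)
    (hg'L : LipschitzWith Kg' g') (hxz : ⟪x, z⟫ = 0) (a : ℝ) :
    |∫ w, f ⟪x, w⟫ * g ⟪a • x + z, w⟫ ∂ProbabilityTheory.stdGaussian E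
        - (∫ u, f u ∂gaussianReal 0 (‖x‖₊ ^ 2)) * (∫ u, g u ∂gaussianReal 0 (‖z‖₊ ^ 2))
        - a * (‖x‖ ^ 2 * (∫ u, f' u ∂gaussianReal 0 (‖x‖₊ ^ 2))
          * ∫ u, g' u ∂gaussianReal 0 (‖z‖₊ ^ 2))|
      ≤ Kg' * a ^ 2 * ∫ u, |u ^ 2 * f u| ∂gaussianReal 0 (‖x‖₊ ^ 2) := by
  have hf_cont := hfL.continuous
  have hg_cont := hgL.continuous
  have hstein : ∫ u, u * f u ∂gaussianReal 0 (‖x‖₊ ^ 2)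
      = ‖x‖ ^ 2 * ∫ u, f' u ∂gaussianReal 0 (‖x‖₊ ^ 2) :=
    integral_id_mul_gaussianReal_of_lipschitzWith hf hfL hf'L
  have hjoint : ∫ w, f ⟪x, w⟫ * g ⟪a • x + z, w⟫ ∂ProbabilityTheory.stdGaussian E
      = ∫ u, f u.1 * g (a * u.1 + u.2)
        ∂(gaussianReal 0 (‖x‖₊ ^ 2)).prod (gaussianReal 0 (‖z‖₊ ^ 2)) := by
    rw [← map_inner_prodMk_stdGaussian hxz, integral_map (by fun_prop)
      (Continuous.aestronglyMeasurable (by fun_prop))]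
    simp only [inner_add_left, real_inner_smul_left]
  rw [hjoint, ← hstein]
  exact abs_integral_prod_mul_comp_add_sub_le hg hg'L
    (integrable_gaussianReal_of_lipschitzWith hfL)
    (integrable_id_mul_gaussianReal_of_lipschitzWith hfL)
    ((memLp_pow_gaussianReal 2).integrable_mul
      (memLp_gaussianReal_of_lipschitzWith hfL 2 (by simp)))
    (integrable_gaussianReal_of_lipschitzWith hgL)
    (integrable_gaussianReal_of_lipschitzWith hg'L) a

lemma integral_pi_gaussianReal_eq_integral_stdGaussian {ι : Type*} [Fintype ι]
    (F : EuclideanSpace ℝ ι → ℝ) :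
    ∫ w, F (WithLp.toLp 2 w) ∂Measure.pi (fun _ : ι => gaussianReal 0 1)
      = ∫ w, F w ∂ProbabilityTheory.stdGaussian (EuclideanSpace ℝ ι) := by
  rw [← map_pi_eq_stdGaussian]
  exact ((MeasurableEquiv.toLp 2 (ι → ℝ)).measurableEmbedding.integral_map F).symm

end StdGaussian

/-- A `C^{1,1}` activation function `σ` with derivative `σ'`, where both `σ` and `σ'` are
`K`-Lipschitz, centred and normalised with respect to the standard Gaussian measure. -/
structure IsNormalizedActivation (K : ℝ≥0) (σ σ' : ℝ → ℝ) : Prop where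
  hasDerivAt : ∀ x, HasDerivAt σ (σ' x) x
  lipschitzWith : LipschitzWith K σ
  lipschitzWith_deriv : LipschitzWith K σ'
  integral_eq_zero : ∫ x, σ x ∂gaussianReal 0 1 = 0
  integral_sq_eq_one : ∫ x, σ x ^ 2 ∂gaussianReal 0 1 = 1

namespace IsNormalizedActivation

variable {K : ℝ≥0} {σ σ' : ℝ → ℝ}

lemma memLp_two (h : IsNormalizedActivation K σ σ') (m : ℝ) (v : ℝ≥0) :
    MemLp σ 2 (gaussianReal m v) :=
  memLp_gaussianReal_of_lipschitzWith h.lipschitzWith 2 (by simp)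

lemma one_le (h : IsNormalizedActivation K σ σ') : 1 ≤ (K : ℝ) := by
  have hvar : Var[σ; gaussianReal 0 1] = 1 := by
    rw [variance_of_integral_eq_zero h.lipschitzWith.continuous.aemeasurable h.integral_eq_zero]
    exact h.integral_sq_eq_one
  have hle := variance_le_sq_mul_variance_of_lipschitzWith
    (memLp_id_gaussianReal' (μ := 0) (v := 1) 2 (by simp)) h.lipschitzWith
  rw [hvar, variance_id_gaussianReal, NNReal.coe_one, mul_one] at hle
  exact (one_le_sq_iff₀ K.2).1 hle

lemma abs_integral_deriv_le_one (h : IsNormalizedActivation K σ σ') :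
    |∫ x, σ' x ∂gaussianReal 0 1| ≤ 1 := by
  have hstein : ∫ x, x * σ x ∂gaussianReal 0 1 = ∫ x, σ' x ∂gaussianReal 0 1 := by
    simpa using integral_id_mul_gaussianReal_of_lipschitzWith (v := 1) h.hasDerivAt
      h.lipschitzWith h.lipschitzWith_deriv
  have hle := integral_abs_mul_le_mul_of_integral_sq_le
    (memLp_id_gaussianReal' (μ := 0) (v := 1) 2 (by simp)) (h.memLp_two 0 1)
    zero_le_one zero_le_one (by simp [integral_sq_gaussianReal]) (by simp [h.integral_sq_eq_one])
  rw [← hstein]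
  exact abs_integral_le_integral_abs.trans (by simpa using hle)

lemma abs_integral_gaussianReal_le (h : IsNormalizedActivation K σ σ') (s : ℝ≥0) :
    |∫ x, σ x ∂gaussianReal 0 (s ^ 2)| ≤ K * |(s ^ 2 - 1 : ℝ)| := by
  simpa [h.integral_eq_zero] using
    abs_integral_gaussianReal_sub_integral_gaussianReal_one_le h.lipschitzWith s

lemma abs_integral_sq_gaussianReal_sub_one_le (h : IsNormalizedActivation K σ σ') (s : ℝ≥0) :
    |∫ x, σ x ^ 2 ∂gaussianReal 0 (s ^ 2) - 1|
      ≤ 2 * (K * |(s ^ 2 - 1 : ℝ)|) + (K * |(s ^ 2 - 1 : ℝ)|) ^ 2 := by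
  have hle := abs_integral_sq_gaussianReal_sub_le h.lipschitzWith s 1 zero_le_one
    (by simp [h.integral_sq_eq_one])
  rw [one_pow, h.integral_sq_eq_one, mul_one, NNReal.coe_one] at hle
  have hs := abs_sub_one_le_abs_sq_sub_one s.2
  exact hle.trans (by gcongr 2 * (K * ?_) + (K * ?_) ^ 2 <;> exact hs)

lemma integral_sq_gaussianReal_le (h : IsNormalizedActivation K σ σ') {s : ℝ≥0} {ε : ℝ}
    (hs : |(s ^ 2 - 1 : ℝ)| ≤ ε) :
    ∫ x, σ x ^ 2 ∂gaussianReal 0 (s ^ 2) ≤ (1 + K * ε) ^ 2 := by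
  have hle := (abs_le.1 (h.abs_integral_sq_gaussianReal_sub_one_le s)).2
  calc ∫ x, σ x ^ 2 ∂gaussianReal 0 (s ^ 2) ≤ (1 + K * |(s ^ 2 - 1 : ℝ)|) ^ 2 := by linarith
    _ ≤ (1 + K * ε) ^ 2 := by gcongr

lemma integral_abs_sq_mul_gaussianReal_le_three_mul (h : IsNormalizedActivation K σ σ') {s : ℝ≥0}
    {ε : ℝ} (hs : |(s ^ 2 - 1 : ℝ)| ≤ ε) (hKε : 2 * (K * ε) ≤ 1) :
    ∫ x, |x ^ 2 * σ x| ∂gaussianReal 0 (s ^ 2) ≤ 3 * (s : ℝ) ^ 2 := by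
  have hε : 0 ≤ ε := (abs_nonneg _).trans hs
  calc ∫ x, |x ^ 2 * σ x| ∂gaussianReal 0 (s ^ 2) ≤ 2 * (s : ℝ) ^ 2 * (1 + K * ε) :=
        integral_abs_sq_mul_gaussianReal_le (h.memLp_two _ _) (by positivity)
          (h.integral_sq_gaussianReal_le hs)
    _ ≤ 2 * (s : ℝ) ^ 2 * (3 / 2) := by gcongr; linarith
    _ = 3 * (s : ℝ) ^ 2 := by ring

variable {E : Type*} [NormedAddCommGroup E] [InnerProductSpace ℝ E] [FiniteDimensional ℝ E]
  [MeasurableSpace E] [BorelSpace E] {x y : E} {ε : ℝ}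

lemma abs_integral_comp_inner_le (h : IsNormalizedActivation K σ σ') (x : E) :
    |∫ w, σ ⟪x, w⟫ ∂ProbabilityTheory.stdGaussian E| ≤ K * |‖x‖ ^ 2 - 1| := by
  rw [integral_comp_inner_stdGaussian h.lipschitzWith.continuous]
  exact h.abs_integral_gaussianReal_le ‖x‖₊

lemma abs_integral_sq_comp_inner_sub_one_le (h : IsNormalizedActivation K σ σ')
    (hx : (K : ℝ) * |‖x‖ ^ 2 - 1| ≤ 1) :
    |∫ w, σ ⟪x, w⟫ ^ 2 ∂ProbabilityTheory.stdGaussian E - 1| ≤ 3 * K * |‖x‖ ^ 2 - 1| := by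
  have hsq : ((K : ℝ) * |‖x‖ ^ 2 - 1|) ^ 2 ≤ K * |‖x‖ ^ 2 - 1| :=
    pow_le_of_le_one (by positivity) hx two_ne_zero
  rw [integral_comp_inner_stdGaussian (f := fun u => σ u ^ 2)
    (h.lipschitzWith.continuous.pow 2)]
  refine (h.abs_integral_sq_gaussianReal_sub_one_le ‖x‖₊).trans ?_
  rw [coe_nnnorm]
  linarith

lemma abs_integral_mul_comp_inner_le (h : IsNormalizedActivation K σ σ')
    (hx : |‖x‖ ^ 2 - 1| ≤ ε) (hy : |‖y‖ ^ 2 - 1| ≤ ε) :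
    |∫ w, σ ⟪x, w⟫ * σ ⟪y, w⟫ ∂ProbabilityTheory.stdGaussian E| ≤ (1 + K * ε) ^ 2 := by
  have hε : 0 ≤ ε := (abs_nonneg _).trans hx
  have hmemLp (v : E) : MemLp (fun w => σ ⟪v, w⟫) 2 (ProbabilityTheory.stdGaussian E) :=
    memLp_comp_of_lipschitzWith h.lipschitzWith (IsGaussian.memLp_two_id.const_inner v)
  have hsq {v : E} (hv : |‖v‖ ^ 2 - 1| ≤ ε) :
      ∫ w, σ ⟪v, w⟫ ^ 2 ∂ProbabilityTheory.stdGaussian E ≤ (1 + K * ε) ^ 2 := by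
    rw [integral_comp_inner_stdGaussian (f := fun u => σ u ^ 2)
    (h.lipschitzWith.continuous.pow 2)]
    exact h.integral_sq_gaussianReal_le hv
  rw [sq]
  exact abs_integral_le_integral_abs.trans (integral_abs_mul_le_mul_of_integral_sq_le
    (hmemLp x) (hmemLp y) (by positivity) (by positivity) (hsq hx) (hsq hy))

lemma abs_integral_mul_comp_inner_sub_le_of_large (h : IsNormalizedActivation K σ σ')
    (hx : |‖x‖ ^ 2 - 1| ≤ ε) (hy : |‖y‖ ^ 2 - 1| ≤ ε) (hxy : |⟪x, y⟫| ≤ ε)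
    (hKε : 1 ≤ 2 * (K * ε)) :
    |∫ w, σ ⟪x, w⟫ * σ ⟪y, w⟫ ∂ProbabilityTheory.stdGaussian E
        - (∫ u, σ' u ∂gaussianReal 0 1) ^ 2 * ⟪x, y⟫| ≤ 12 * K ^ 2 * ε ^ 2 := by
  have hε : 0 ≤ ε := (abs_nonneg _).trans hx
  have hentry := h.abs_integral_mul_comp_inner_le hx hy
  have hlinear : |(∫ u, σ' u ∂gaussianReal 0 1) ^ 2 * ⟪x, y⟫| ≤ 1 * ε := by
    rw [abs_mul, abs_pow]
    gcongr
    exact pow_le_one₀ (abs_nonneg _) h.abs_integral_deriv_le_one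
  calc _ ≤ (1 + K * ε) ^ 2 + 1 * ε := (abs_sub _ _).trans (add_le_add hentry hlinear)
    _ ≤ (3 * (K * ε)) ^ 2 + 2 * (K * ε) * (K * ε) := by
        gcongr ?_ ^ 2 + ?_ * ?_
        · linarith
        · exact le_mul_of_one_le_left hε h.one_le
    _ ≤ 12 * K ^ 2 * ε ^ 2 := by nlinarith [sq_nonneg (K * ε)]

lemma abs_integral_deriv_mul_sub_sq_le (h : IsNormalizedActivation K σ σ') {s t : ℝ≥0}
    (hs : |(s ^ 2 - 1 : ℝ)| ≤ ε) (ht : |(t ^ 2 - 1 : ℝ)| ≤ 2 * ε) (hKε : 2 * (K * ε) ≤ 1) :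
    |(∫ u, σ' u ∂gaussianReal 0 (s ^ 2)) * (∫ u, σ' u ∂gaussianReal 0 (t ^ 2))
        - (∫ u, σ' u ∂gaussianReal 0 1) ^ 2| ≤ 4 * (K * ε) := by
  set b := ∫ u, σ' u ∂gaussianReal 0 1
  set bs := ∫ u, σ' u ∂gaussianReal 0 (s ^ 2)
  set bt := ∫ u, σ' u ∂gaussianReal 0 (t ^ 2)
  have hb : |b| ≤ 1 := h.abs_integral_deriv_le_one
  have hbs : |bs - b| ≤ K * ε :=
    (abs_integral_gaussianReal_sub_integral_gaussianReal_one_le h.lipschitzWith_deriv s).trans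
      (by gcongr)
  have hbt : |bt - b| ≤ K * (2 * ε) :=
    (abs_integral_gaussianReal_sub_integral_gaussianReal_one_le h.lipschitzWith_deriv t).trans
      (by gcongr)
  have hbt_le : |bt| ≤ 2 := by
    linarith [abs_sub_abs_le_abs_sub bt b]
  have hKε_nonneg : 0 ≤ K * ε := (abs_nonneg _).trans hbs
  calc |bs * bt - b ^ 2| = |(bs - b) * bt + b * (bt - b)| := by congr 1; ring
    _ ≤ |bs - b| * |bt| + |b| * |bt - b| := by
        rw [← abs_mul, ← abs_mul]
        exact abs_add_le _ _
    _ ≤ K * ε * 2 + 1 * (K * (2 * ε)) := by gcongr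
    _ = 4 * (K * ε) := by ring

lemma abs_integral_mul_comp_inner_smul_add_sub_le (h : IsNormalizedActivation K σ σ') {z : E}
    (hxz : ⟪x, z⟫ = 0) (hx : |‖x‖ ^ 2 - 1| ≤ ε) (hz : |‖z‖ ^ 2 - 1| ≤ 2 * ε)
    (hKε : 2 * (K * ε) ≤ 1) {a : ℝ} (ha : |a * ‖x‖ ^ 2| ≤ ε) :
    |∫ w, σ ⟪x, w⟫ * σ ⟪a • x + z, w⟫ ∂ProbabilityTheory.stdGaussian E
        - (∫ u, σ' u ∂gaussianReal 0 1) ^ 2 * (a * ‖x‖ ^ 2)| ≤ 12 * K ^ 2 * ε ^ 2 := by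
  have hε : 0 ≤ ε := (abs_nonneg _).trans hx
  have hdecouple := abs_integral_mul_comp_inner_sub_le h.hasDerivAt h.hasDerivAt h.lipschitzWith
    h.lipschitzWith_deriv h.lipschitzWith h.lipschitzWith_deriv hxz a
  have hx_half : 1 / 2 ≤ ‖x‖ ^ 2 := by
    linarith [(abs_le.1 hx).1, le_mul_of_one_le_left hε h.one_le]
  have ha_sq : a ^ 2 * ‖x‖ ^ 2 ≤ 2 * ε ^ 2 := by
    nlinarith [sq_le_sq' (abs_le.1 ha).1 (abs_le.1 ha).2, mul_nonneg (sq_nonneg a) (sq_nonneg ‖x‖)]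
  have hremainder : K * a ^ 2 * ∫ u, |u ^ 2 * σ u| ∂gaussianReal 0 (‖x‖₊ ^ 2)
      ≤ K * (6 * ε ^ 2) := by
    calc _ ≤ K * a ^ 2 * (3 * ‖x‖ ^ 2) := by
          gcongr
          exact h.integral_abs_sq_mul_gaussianReal_le_three_mul hx hKε
      _ = K * (3 * (a ^ 2 * ‖x‖ ^ 2)) := by ring
      _ ≤ K * (3 * (2 * ε ^ 2)) := by gcongr
      _ = K * (6 * ε ^ 2) := by ring
  have hmeans : |(∫ u, σ u ∂gaussianReal 0 (‖x‖₊ ^ 2)) * ∫ u, σ u ∂gaussianReal 0 (‖z‖₊ ^ 2)|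
      ≤ K * ε * (K * (2 * ε)) := by
    rw [abs_mul]
    exact mul_le_mul ((h.abs_integral_gaussianReal_le _).trans (by gcongr; exact hx))
      ((h.abs_integral_gaussianReal_le _).trans (by gcongr; exact hz)) (abs_nonneg _)
      (by positivity)
  have hslopes : |a * ‖x‖ ^ 2 * ((∫ u, σ' u ∂gaussianReal 0 (‖x‖₊ ^ 2))
      * (∫ u, σ' u ∂gaussianReal 0 (‖z‖₊ ^ 2)) - (∫ u, σ' u ∂gaussianReal 0 1) ^ 2)|
      ≤ ε * (4 * (K * ε)) := by
    rw [abs_mul]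
    exact mul_le_mul ha (h.abs_integral_deriv_mul_sub_sq_le hx hz hKε) (abs_nonneg _) hε
  have hK : K * ε ^ 2 ≤ K ^ 2 * ε ^ 2 := by
    gcongr
    exact le_self_pow₀ h.one_le two_ne_zero
  rw [abs_le] at hdecouple hmeans hslopes ⊢
  constructor <;> linarith

lemma abs_integral_mul_comp_inner_sub_le_of_small (h : IsNormalizedActivation K σ σ')
    (hx : |‖x‖ ^ 2 - 1| ≤ ε) (hy : |‖y‖ ^ 2 - 1| ≤ ε) (hxy : |⟪x, y⟫| ≤ ε)
    (hKε : 2 * (K * ε) ≤ 1) :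
    |∫ w, σ ⟪x, w⟫ * σ ⟪y, w⟫ ∂ProbabilityTheory.stdGaussian E
        - (∫ u, σ' u ∂gaussianReal 0 1) ^ 2 * ⟪x, y⟫| ≤ 12 * K ^ 2 * ε ^ 2 := by
  have hε : 0 ≤ ε := (abs_nonneg _).trans hx
  have hε_half : 2 * ε ≤ 1 := by linarith [le_mul_of_one_le_left hε h.one_le]
  have hx_half : 1 / 2 ≤ ‖x‖ ^ 2 := by linarith [(abs_le.1 hx).1]
  set a := ⟪x, y⟫ / ‖x‖ ^ 2 with ha
  have hax : a * ‖x‖ ^ 2 = ⟪x, y⟫ := div_mul_cancel₀ _ (by linarith)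
  have horth : ⟪x, y - a • x⟫ = 0 := by
    rw [inner_sub_right, real_inner_smul_right, real_inner_self_eq_norm_sq, hax, sub_self]
  have hnorm : |‖y - a • x‖ ^ 2 - 1| ≤ 2 * ε := by
    have hratio_nonneg : 0 ≤ ⟪x, y⟫ ^ 2 / ‖x‖ ^ 2 := by positivity
    have hratio_le : ⟪x, y⟫ ^ 2 / ‖x‖ ^ 2 ≤ ε := by
      rw [div_le_iff₀ (by linarith)]
      nlinarith [sq_le_sq' (abs_le.1 hxy).1 (abs_le.1 hxy).2]
    rw [ha, norm_sub_inner_div_smul_sq]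
    rw [abs_le] at hy ⊢
    constructor <;> linarith
  have hmain := h.abs_integral_mul_comp_inner_smul_add_sub_le horth hx hnorm hKε (a := a)
    (by rwa [hax])
  rwa [hax, add_sub_cancel] at hmain

theorem abs_integral_mul_comp_inner_sub_sq_mul_inner_le (h : IsNormalizedActivation K σ σ')
    (hx : |‖x‖ ^ 2 - 1| ≤ ε) (hy : |‖y‖ ^ 2 - 1| ≤ ε) (hxy : |⟪x, y⟫| ≤ ε) :
    |∫ w, σ ⟪x, w⟫ * σ ⟪y, w⟫ ∂ProbabilityTheory.stdGaussian E
        - (∫ u, σ' u ∂gaussianReal 0 1) ^ 2 * ⟪x, y⟫| ≤ 12 * K ^ 2 * ε ^ 2 :=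
  (le_total 1 (2 * (K * ε))).elim (h.abs_integral_mul_comp_inner_sub_le_of_large hx hy hxy)
    (h.abs_integral_mul_comp_inner_sub_le_of_small hx hy hxy)

end IsNormalizedActivation

section Columns

variable {ι κ : Type*} [Fintype ι] (X : Matrix ι κ ℝ) (α β : κ)

lemma inner_toLp_col (w : ι → ℝ) :
    ⟪WithLp.toLp 2 (X.col α), WithLp.toLp 2 w⟫ = ∑ i, w i * X i α := by
  simp [PiLp.inner_apply]

lemma inner_toLp_col_toLp_col :
    ⟪WithLp.toLp 2 (X.col α), WithLp.toLp 2 (X.col β)⟫ = ∑ i, X i α * X i β := by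
  simp [PiLp.inner_apply, mul_comm]

lemma norm_toLp_col_sq : ‖WithLp.toLp 2 (X.col α)‖ ^ 2 = ∑ i, X i α ^ 2 := by
  simp [EuclideanSpace.real_norm_sq_eq]

lemma integral_gaussianVec_comp_sum_mul {d : ℕ} (X : Matrix (Fin d) κ ℝ) (F : ℝ → ℝ) :
    ∫ w, F (∑ i, w i * X i α) ∂gaussianVec d
      = ∫ w, F ⟪WithLp.toLp 2 (X.col α), w⟫
        ∂ProbabilityTheory.stdGaussian (EuclideanSpace ℝ (Fin d)) := by
  simp only [← inner_toLp_col]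
  exact integral_pi_gaussianReal_eq_integral_stdGaussian fun w => F ⟪WithLp.toLp 2 (X.col α), w⟫

lemma integral_gaussianVec_comp_sum_mul_mul_comp_sum_mul {d : ℕ} (X : Matrix (Fin d) κ ℝ)
    (F G : ℝ → ℝ) :
    ∫ w, F (∑ i, w i * X i α) * G (∑ i, w i * X i β) ∂gaussianVec d
      = ∫ w, F ⟪WithLp.toLp 2 (X.col α), w⟫ * G ⟪WithLp.toLp 2 (X.col β), w⟫
        ∂ProbabilityTheory.stdGaussian (EuclideanSpace ℝ (Fin d)) := by
  simp only [← inner_toLp_col]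
  exact integral_pi_gaussianReal_eq_integral_stdGaussian fun w =>
    F ⟪WithLp.toLp 2 (X.col α), w⟫ * G ⟪WithLp.toLp 2 (X.col β), w⟫

end Columns

theorem phi_entry_bounds_general :
    ∃ C : ℝ, 0 < C ∧
      ∀ (d n : ℕ) (X : Matrix (Fin d) (Fin n) ℝ) (ε : ℝ) (K : ℝ≥0) (σ σ' : ℝ → ℝ),
        IsNormalizedActivation K σ σ' →
        (∀ α, |(∑ i, X i α ^ 2) - 1| ≤ ε) →
        (∀ α β, α ≠ β → |∑ i, X i α * X i β| ≤ ε) →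
        (∀ α β : Fin n, α ≠ β →
          |(∫ w, σ (∑ i, w i * X i α) * σ (∑ i, w i * X i β) ∂gaussianVec d) -
              (∫ x, σ' x ∂stdGaussian) ^ 2 * ∑ i, X i α * X i β| ≤
            C * K ^ 2 * ε ^ 2) ∧
        (∀ α : Fin n,
          |∫ w, σ (∑ i, w i * X i α) ∂gaussianVec d| ≤ C * K * |(∑ i, X i α ^ 2) - 1| ∧
            C * K * |(∑ i, X i α ^ 2) - 1| ≤ C * K * ε) ∧
        (ε < 1 / K → ∀ α : Fin n,
          |(∫ w, σ (∑ i, w i * X i α) * σ (∑ i, w i * X i α) ∂gaussianVec d) - 1| ≤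
              C * K * |(∑ i, X i α ^ 2) - 1| ∧
            C * K * |(∑ i, X i α ^ 2) - 1| ≤ C * K * ε) := by
  refine ⟨12, by norm_num, fun d n X ε K σ σ' hσ hnorm hinner => ?_⟩
  simp only [integral_gaussianVec_comp_sum_mul_mul_comp_sum_mul, integral_gaussianVec_comp_sum_mul,
    ← norm_toLp_col_sq, ← inner_toLp_col_toLp_col] at hnorm hinner ⊢
  have hδ (α : Fin n) :
      12 * K * |‖WithLp.toLp 2 (X.col α)‖ ^ 2 - 1| ≤ 12 * K * ε :=
    mul_le_mul_of_nonneg_left (hnorm α) (by positivity)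
  refine ⟨fun α β hαβ => hσ.abs_integral_mul_comp_inner_sub_sq_mul_inner_le (hnorm α) (hnorm β)
    (hinner α β hαβ), fun α => ⟨(hσ.abs_integral_comp_inner_le _).trans ?_, hδ α⟩,
    fun hε α => ⟨?_, hδ α⟩⟩
  · gcongr
    exact le_mul_of_one_le_left K.2 (by norm_num)
  · have hsmall : (K : ℝ) * |‖WithLp.toLp 2 (X.col α)‖ ^ 2 - 1| ≤ 1 := by
      have hK : 0 < (K : ℝ) := zero_lt_one.trans_le hσ.one_le
      rw [mul_comm, ← le_div_iff₀ hK]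
      exact (hnorm α).trans hε.le
    simp only [← sq]
    refine (hσ.abs_integral_sq_comp_inner_sub_one_le hsmall).trans ?_
    gcongr
    norm_num

theorem phi_entry_bounds :
    ∃ C : ℝ, 0 < C ∧
      ∀ (d n : ℕ) (X : Matrix (Fin d) (Fin n) ℝ) (ε B lamσ : ℝ)
        (σ σ' σ'' : ℝ → ℝ),
        (∀ x, HasDerivAt σ (σ' x) x) →
        (∀ x, HasDerivAt σ' (σ'' x) x) →
        (∀ x, |σ' x| ≤ lamσ) →
        (∀ x, |σ'' x| ≤ lamσ) →
        (∫ x, σ x ∂stdGaussian) = 0 →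
        (∫ x, (σ x) ^ 2 ∂stdGaussian) = 1 →
        IsOrthonormal ε B X →
        ε < 1 / lamσ →
        -- (i) off-diagonal entries of Φ
        (∀ α β : Fin n, α ≠ β →
          |(∫ w, σ (∑ i, w i * X i α) * σ (∑ i, w i * X i β) ∂gaussianVec d) -
              (∫ x, σ' x ∂stdGaussian) ^ 2 * ∑ i, X i α * X i β| ≤
            C * lamσ ^ 2 * ε ^ 2) ∧
        -- (ii) means of the post-activations
        (∀ α : Fin n,
          |∫ w, σ (∑ i, w i * X i α) ∂gaussianVec d| ≤
              C * lamσ * |(∑ i, X i α ^ 2) - 1| ∧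
            C * lamσ * |(∑ i, X i α ^ 2) - 1| ≤ C * lamσ * ε) ∧
        -- (iii) diagonal entries of Φ
        (∀ α : Fin n,
          |(∫ w, σ (∑ i, w i * X i α) * σ (∑ i, w i * X i α) ∂gaussianVec d) - 1| ≤
              C * lamσ * |(∑ i, X i α ^ 2) - 1| ∧
            C * lamσ * |(∑ i, X i α ^ 2) - 1| ≤ C * lamσ * ε) := by
  obtain ⟨C, hC, hbounds⟩ := phi_entry_bounds_general
  refine ⟨C, hC, fun d n X ε B lamσ σ σ' σ'' hσ hσ' hσ'_le hσ''_le hmean hsq hX hε => ?_⟩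
  lift lamσ to ℝ≥0 using (abs_nonneg _).trans (hσ'_le 0)
  obtain ⟨hoff, hmeans, hdiag⟩ := hbounds d n X ε lamσ σ σ'
    ⟨hσ, lipschitzWith_of_abs_deriv_le hσ hσ'_le, lipschitzWith_of_abs_deriv_le hσ' hσ''_le, hmean,
      hsq⟩ hX.1 hX.2.1
  exact ⟨hoff, hmeans, hdiag hε⟩
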